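/- Let b ≥ 2 be an integer with smallest prime factor ρ_b, and let a = (a_j)_{j≥1} be a nondecreasing sequence of real weights such that a_j ≥ a·j^r for all j > A, where a > 0, r > 0 and A ∈ ℕ₀. Let C = (b−1)·(A + r^{−1}·Γ(1/r)·a^{−1/r}) + S_∞ + 1 with S_∞ = (b−1)·∑_{j≥1} #{i ∈ ℕ : i + a_j ≤ 1}, and set D = ((log ρ_b)/C)^{(2r+1)/(r+1)}. Then there exists a constant Ĉ > 0, independent of s and d, such that for every s ∈ ℕ and every positive integer d there exists a digital net P over ℤ_b with precision l satisfying |P| = b^d, l ≥ D·d^{(2r+1)/(r+1)} − 1 − a_1, and e^wor(P, W'_{s,a}) ≤ Ĉ · exp( −(D·log b / 2)·d^{(2r+1)/(r+1)} ). -/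

import Mathlib

open MeasureTheory Matrix Filter
open scoped ENNReal BigOperators Topology

noncomputable section

/-- The `b`-adic digit of `k : ℕ` at place `b^i` (i.e. the `(i+1)`-st digit). -/
def natDigit (b k i : ℕ) : ℕ := k / b ^ i % b

/-- The `(i+1)`-st `b`-adic digit of a real number `x ∈ [0,1)`
(using the expansion in which infinitely many digits differ from `b-1`). -/
def realDigit (b : ℕ) (x : ℝ) (i : ℕ) : ℕ := (⌊x * (b : ℝ) ^ (i + 1)⌋ % (b : ℤ)).toNat

/-- The `k`-th one-dimensional `b`-adic Walsh function. -/
def wal1 (b k : ℕ) (x : ℝ) : ℂ :=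
  Complex.exp (2 * Real.pi * Complex.I / (b : ℂ) *
    ((∑ i ∈ Finset.range k, natDigit b k i * realDigit b x i : ℕ) : ℂ))

/-- The `k`-th `s`-dimensional `b`-adic Walsh function. -/
def wal (b : ℕ) {s : ℕ} (k : Fin s → ℕ) (x : Fin s → ℝ) : ℂ :=
  ∏ j, wal1 b (k j) (x j)

/-- The unit cube `[0,1)^s`. -/
def unitCube (s : ℕ) : Set (Fin s → ℝ) := Set.univ.pi fun _ => Set.Ico (0 : ℝ) 1

/-- The `k`-th Walsh coefficient of `f`. -/
def walshCoeff (b : ℕ) {s : ℕ} (f : (Fin s → ℝ) → ℝ) (k : Fin s → ℕ) : ℂ :=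
  ∫ x in unitCube s, (f x : ℂ) * (starRingEnd ℂ) (wal b k x)

/-- The generalized Dick weight `μ_a(k)`, one-dimensional case. -/
def dickWt (b : ℕ) (a : ℝ) (k : ℕ) : ℝ :=
  ∑ i ∈ Finset.range k, if natDigit b k i ≠ 0 then ((i : ℝ) + 1 + a) else 0

/-- The generalized Dick weight `μ_a(k)` for vectors. -/
def dickWtV (b : ℕ) {s : ℕ} (a : Fin s → ℝ) (k : Fin s → ℕ) : ℝ :=
  ∑ j, dickWt b (a j) (k j)

/-- The modified Dick weight `μ'_a(k)`, one-dimensional case. -/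
def mdickWt (b : ℕ) (a : ℝ) (k : ℕ) : ℝ :=
  ∑ i ∈ Finset.range k, if natDigit b k i ≠ 0 then max ((i : ℝ) + 1 + a) 1 else 0

/-- The modified Dick weight `μ'_a(k)` for vectors. -/
def mdickWtV (b : ℕ) {s : ℕ} (a : Fin s → ℝ) (k : Fin s → ℕ) : ℝ :=
  ∑ j, mdickWt b (a j) (k j)

/-- Digitwise subtraction modulo `b` of natural numbers. -/
def dsub (b k k' : ℕ) : ℕ :=
  ∑ i ∈ Finset.range (k + k' + 1), ((natDigit b k i + (b - natDigit b k' i)) % b) * b ^ i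

/-- The integral of `f` over the unit cube. -/
def intBox (s : ℕ) (f : (Fin s → ℝ) → ℝ) : ℝ := ∫ x in unitCube s, f x

/-- Membership in the Walsh space `W_{s,a}`: `f` equals its (convergent) Walsh series
and has finite norm. -/
def MemW (b : ℕ) {s : ℕ} (a : Fin s → ℝ) (f : (Fin s → ℝ) → ℝ) : Prop :=
  (∀ x ∈ unitCube s, HasSum (fun k : Fin s → ℕ => walshCoeff b f k * wal b k x) ((f x : ℂ))) ∧
  BddAbove (Set.range fun k : Fin s → ℕ => ‖walshCoeff b f k‖ * (b : ℝ) ^ dickWtV b a k)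

/-- The norm of the Walsh space `W_{s,a}`. -/
def normW (b : ℕ) {s : ℕ} (a : Fin s → ℝ) (f : (Fin s → ℝ) → ℝ) : ℝ :=
  ⨆ k : Fin s → ℕ, ‖walshCoeff b f k‖ * (b : ℝ) ^ dickWtV b a k

/-- Membership in the modified Walsh space `W'_{s,a}`. -/
def MemW' (b : ℕ) {s : ℕ} (a : Fin s → ℝ) (f : (Fin s → ℝ) → ℝ) : Prop :=
  (∀ x ∈ unitCube s, HasSum (fun k : Fin s → ℕ => walshCoeff b f k * wal b k x) ((f x : ℂ))) ∧
  BddAbove (Set.range fun k : Fin s → ℕ => ‖walshCoeff b f k‖ * (b : ℝ) ^ mdickWtV b a k)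

/-- The norm of the modified Walsh space `W'_{s,a}`. -/
def normW' (b : ℕ) {s : ℕ} (a : Fin s → ℝ) (f : (Fin s → ℝ) → ℝ) : ℝ :=
  ⨆ k : Fin s → ℕ, ‖walshCoeff b f k‖ * (b : ℝ) ^ mdickWtV b a k

/-- The worst-case error of the algorithm `A` over the unit ball of `(H, N)`. -/
def worstErr (s : ℕ) (H : Set ((Fin s → ℝ) → ℝ)) (N : ((Fin s → ℝ) → ℝ) → ℝ)
    (A : ((Fin s → ℝ) → ℝ) → ℝ) : ℝ≥0∞ :=
  ⨆ (f : (Fin s → ℝ) → ℝ) (_ : f ∈ H) (_ : N f ≤ 1), ENNReal.ofReal |intBox s f - A f|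

/-- The `n`-th minimal worst-case error over all algorithms using `n` function values
at points of the unit cube. -/
def minErr (n s : ℕ) (H : Set ((Fin s → ℝ) → ℝ)) (N : ((Fin s → ℝ) → ℝ) → ℝ) : ℝ≥0∞ :=
  ⨅ (t : Fin n → Fin s → ℝ) (_ : ∀ i, t i ∈ unitCube s) (φ : (Fin n → ℝ) → ℝ),
    worstErr s H N fun f => φ fun i => f (t i)

/-- Partial derivative in the `j`-th coordinate. -/
def pd {s : ℕ} (j : Fin s) (f : (Fin s → ℝ) → ℝ) : (Fin s → ℝ) → ℝ :=
  fun x => deriv (fun t => f (Function.update x j t)) (x j)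

/-- The mixed partial derivative `f^{(α)}`. -/
def mpd {s : ℕ} (α : Fin s → ℕ) (f : (Fin s → ℝ) → ℝ) : (Fin s → ℝ) → ℝ :=
  (List.finRange s).foldr (fun j g => (pd j)^[α j] g) f

/-- Membership in the space `S_{s,u}` of smooth functions. -/
def MemS {s : ℕ} (u : Fin s → ℝ) (f : (Fin s → ℝ) → ℝ) : Prop :=
  ContDiff ℝ (⊤ : ℕ∞) f ∧
  BddAbove (Set.range fun α : Fin s → ℕ =>
    (∫ x in unitCube s, |mpd α f x|) / ∏ j, u j ^ α j)

/-- The norm of the space `S_{s,u}`. -/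
def normS {s : ℕ} (u : Fin s → ℝ) (f : (Fin s → ℝ) → ℝ) : ℝ :=
  ⨆ α : Fin s → ℕ, (∫ x in unitCube s, |mpd α f x|) / ∏ j, u j ^ α j

/-- The column vector of the first `m` `b`-adic digits of `k`. -/
def trunc (b m k : ℕ) : Fin m → ZMod b := fun i => (natDigit b k (i : ℕ) : ZMod b)

/-- The `m`-th point of the digital net determined by generating matrices `G`. -/
def netPoint (b : ℕ) {s l d : ℕ} (G : Fin s → Matrix (Fin l) (Fin d) (ZMod b)) (m : ℕ) :
    Fin s → ℝ :=
  fun j => ∑ i : Fin l, (((G j).mulVec (trunc b d m)) i).val / (b : ℝ) ^ ((i : ℕ) + 1)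

/-- The dual net of the digital net determined by `G`. -/
def dualNet (b : ℕ) {s l d : ℕ} (G : Fin s → Matrix (Fin l) (Fin d) (ZMod b)) :
    Set (Fin s → ℕ) :=
  {k | ∑ j, (G j)ᵀ.mulVec (trunc b l (k j)) = 0}

/-- The QMC algorithm given by the digital net with generating matrices `G`. -/
def qmcNet (b : ℕ) {s l d : ℕ} (G : Fin s → Matrix (Fin l) (Fin d) (ZMod b))
    (f : (Fin s → ℝ) → ℝ) : ℝ :=
  ((b : ℝ) ^ d)⁻¹ * ∑ m ∈ Finset.range (b ^ d), f (netPoint b G m)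

/-- `n_j = #{i ∈ ℕ : i + a ≤ 1}` (with `i` ranging over positive integers). -/
def negCount (a : ℝ) : ℕ := Set.ncard {i : ℕ | 0 < i ∧ (i : ℝ) + a ≤ 1}



lemma aux_geo {t : ℝ} (ht : 0 < t) (n : ℕ) : ∀ α : ℝ,
    ∑ i ∈ Finset.range n, Real.exp (-t * max ((i : ℝ) + 1 + α) 1) ≤
      (((Finset.range n).filter (fun i : ℕ => (i : ℝ) + α ≤ 0)).card : ℝ) +
        Real.exp (-t * max α 0) / t := by
  induction n with
  | zero => intro α; simp only [Finset.range_zero, Finset.sum_empty, Finset.filter_empty, Finset.card_empty, Nat.cast_zero]; positivity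
  | succ n ih =>
    intro α
    have h1 := ih (α + 1)
    rw [Finset.sum_range_succ', Finset.card_filter, Finset.sum_range_succ']
    rw [Finset.card_filter] at h1
    have e1 : ∑ i ∈ Finset.range n, Real.exp (-t * max (((i + 1 : ℕ) : ℝ) + 1 + α) 1) =
        ∑ i ∈ Finset.range n, Real.exp (-t * max ((i : ℝ) + 1 + (α + 1)) 1) := by
      refine Finset.sum_congr rfl fun i _ => ?_
      have : ((i + 1 : ℕ) : ℝ) + 1 + α = (i : ℝ) + 1 + (α + 1) := by push_cast; ring
      rw [this]
    have e2 : ∑ i ∈ Finset.range n, (if (((i + 1 : ℕ) : ℝ) + α ≤ 0) then 1 else 0) =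
        ∑ i ∈ Finset.range n, (if ((i : ℝ) + (α + 1) ≤ 0) then 1 else 0) := by
      refine Finset.sum_congr rfl fun i _ => ?_
      have : ((i + 1 : ℕ) : ℝ) + α = (i : ℝ) + (α + 1) := by push_cast; ring
      rw [this]
    rw [e1, e2]
    push_cast at h1 ⊢
    rcases le_or_gt α 0 with h | h
    · have a1 : Real.exp (-t * max (0 + 1 + α) 1) ≤ 1 := by
        rw [Real.exp_le_one_iff]
        have : (1:ℝ) ≤ max (0 + 1 + α) 1 := le_max_right _ _
        nlinarith
      have a2 : Real.exp (-t * max (α + 1) 0) / t ≤ Real.exp (-t * max α 0) / t := by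
        gcongr ?_ / t
        apply Real.exp_le_exp.2
        have : max α 0 ≤ max (α + 1) 0 := max_le_max (by linarith) le_rfl
        nlinarith
      simp only [zero_add, h, if_true] at *
      linarith
    · rw [max_eq_left (by linarith : (0:ℝ) ≤ α + 1)] at h1
      rw [max_eq_left (by linarith : (1:ℝ) ≤ 0 + 1 + α), max_eq_left h.le]
      have a1 : Real.exp (-t * (0 + 1 + α)) + Real.exp (-t * (α + 1)) / t ≤
          Real.exp (-t * α) / t := by
        have : Real.exp (-t * α) = Real.exp (-t * (α + 1)) * Real.exp t := by
          rw [← Real.exp_add]; ring_nf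
        rw [this, show (0 + 1 + α) = α + 1 by ring]
        have h3 := Real.add_one_le_exp t
        have h4 := Real.exp_pos (-t * (α + 1))
        rw [← sub_nonneg]
        have : Real.exp (-t * (α + 1)) * Real.exp t / t - (Real.exp (-t * (α + 1)) + Real.exp (-t * (α + 1)) / t) = Real.exp (-t * (α + 1)) * (Real.exp t - (t + 1)) / t := by
          field_simp
        rw [this]
        have : 0 ≤ Real.exp t - (t + 1) := by linarith
        positivity
      have a3 : (0:ℝ) ≤ (if (0:ℝ) + α ≤ 0 then 1 else 0) := by split_ifs <;> norm_num
      linarith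

lemma card_le_negCount (n : ℕ) (α : ℝ) :
    ((Finset.range n).filter (fun i : ℕ => (i : ℝ) + α ≤ 0)).card ≤ negCount α := by
  unfold negCount
  have hfin : {i : ℕ | 0 < i ∧ (i : ℝ) + α ≤ 1}.Finite := by
    refine (Set.finite_Iic (⌈1 - α⌉₊)).subset ?_
    rintro i ⟨_, hi⟩
    simp only [Set.mem_Iic]
    have := Nat.le_ceil (1 - α)
    have h2 : (i : ℝ) ≤ (⌈1 - α⌉₊ : ℝ) := by linarith
    exact_mod_cast h2
  rw [← Finset.card_image_of_injective _ (Nat.succ_injective), ← Set.ncard_coe_finset]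
  refine Set.ncard_le_ncard ?_ hfin
  intro i hi
  simp only [Finset.coe_image, Finset.coe_filter, Finset.mem_range, Set.mem_image,
    Set.mem_ofPred_eq] at hi ⊢
  obtain ⟨j, ⟨_, hj⟩, rfl⟩ := hi
  refine ⟨Nat.succ_pos _, ?_⟩
  push_cast
  linarith

lemma negCount_zero {α : ℝ} (h : 0 < α) : negCount α = 0 := by
  unfold negCount
  convert Set.ncard_empty ℕ
  ext i
  simp only [Set.mem_ofPred_eq, Set.mem_empty_iff_false, iff_false, not_and]
  intro hi hc
  have : (1:ℝ) ≤ i := by exact_mod_cast hi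
  linarith

lemma sum_exp_rpow_le {r c : ℝ} (hr : 0 < r) (hc : 0 < c) (n : ℕ) :
    ∑ i ∈ Finset.range n, Real.exp (-c * ((i : ℝ) + 1) ^ r) ≤
      r⁻¹ * Real.Gamma (1 / r) * c ^ (-(1 / r)) := by
  have h1 : AntitoneOn (fun x : ℝ => Real.exp (-c * x ^ r)) (Set.Icc 0 (0 + (n : ℝ))) := by
    intro x hx y hy hxy
    apply Real.exp_le_exp.2
    have := Real.rpow_le_rpow hx.1 hxy hr.le
    nlinarith
  have h2 := h1.sum_le_integral
  have h3 := integral_exp_neg_mul_rpow hr hc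
  have hint : IntegrableOn (fun x : ℝ => Real.exp (-c * x ^ r)) (Set.Ioi 0) := by
    have := integrableOn_rpow_mul_exp_neg_mul_rpow (s := 0) (by norm_num) hr hc
    simpa using this
  have h4 : ∫ x in (0:ℝ)..(0 + (n:ℝ)), Real.exp (-c * x ^ r) ≤
      ∫ x in Set.Ioi (0:ℝ), Real.exp (-c * x ^ r) := by
    rw [intervalIntegral.integral_of_le (by simp)]
    refine setIntegral_mono_set hint ?_ ?_
    · exact Filter.Eventually.of_forall fun x => (Real.exp_pos _).le
    · exact Filter.Eventually.of_forall fun x hx => hx.1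
  rw [h3, Real.Gamma_add_one (by positivity)] at h4
  have e : c ^ (-1 / r) * (1 / r * Real.Gamma (1 / r)) =
    r⁻¹ * Real.Gamma (1 / r) * c ^ (-(1 / r)) := by
    rw [neg_div]; ring
  rw [e] at h4
  refine le_trans (le_of_eq ?_) (h2.trans h4)
  refine Finset.sum_congr rfl fun i _ => ?_
  push_cast; ring_nf

lemma sum_all {w : ℕ → ℝ} {a r t : ℝ} (ha : 0 < a) (hr : 0 < r) {A : ℕ}
    (hgrow : ∀ j : ℕ, A ≤ j → a * ((j : ℝ) + 1) ^ r ≤ w j) (ht : 0 < t) (s n : ℕ) :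
    ∑ j : Fin s, ∑ i ∈ Finset.range n, Real.exp (-t * max ((i : ℝ) + 1 + w j) 1) ≤
      (A : ℝ) / t + (∑' j : ℕ, (negCount (w j) : ℝ)) +
       r⁻¹ * Real.Gamma (1 / r) * a ^ (-(1 / r)) * (t ^ (-(1 / r)) / t) := by
  have hpos : ∀ j : ℕ, A ≤ j → 0 < w j := fun j hj => lt_of_lt_of_le (by positivity) (hgrow j hj)
  rw [Fin.sum_univ_eq_sum_range (fun j => ∑ i ∈ Finset.range n, Real.exp (-t * max ((i : ℝ) + 1 + w j) 1))]
  have h1 : ∀ j ∈ Finset.range s, ∑ i ∈ Finset.range n, Real.exp (-t * max ((i : ℝ) + 1 + w j) 1) ≤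
      (if j < A then 1 / t else 0) + (negCount (w j) : ℝ) + Real.exp (-(t * a) * ((j : ℝ) + 1) ^ r) / t := by
    intro j _
    have h := aux_geo ht n (w j)
    have hc : (((Finset.range n).filter (fun i : ℕ => (i : ℝ) + w j ≤ 0)).card : ℝ) ≤ negCount (w j) := by
      exact_mod_cast card_le_negCount n (w j)
    split_ifs with hj
    · have : Real.exp (-t * max (w j) 0) / t ≤ 1 / t := by
        gcongr
        rw [Real.exp_le_one_iff]
        have : (0:ℝ) ≤ max (w j) 0 := le_max_right _ _
        nlinarith
      have : 0 ≤ Real.exp (-(t * a) * ((j : ℝ) + 1) ^ r) / t := by positivity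
      linarith
    · have hj' : A ≤ j := not_lt.1 hj
      have : Real.exp (-t * max (w j) 0) / t ≤ Real.exp (-(t * a) * ((j : ℝ) + 1) ^ r) / t := by
        gcongr ?_ / t
        rw [max_eq_left (hpos j hj').le]
        apply Real.exp_le_exp.2
        have := hgrow j hj'
        nlinarith
      linarith
  refine (Finset.sum_le_sum h1).trans ?_
  rw [Finset.sum_add_distrib, Finset.sum_add_distrib, ← Finset.sum_div]
  have g1 : ∑ j ∈ Finset.range s, (if j < A then 1 / t else 0) ≤ (A : ℝ) / t := by
    rw [← Finset.sum_filter, Finset.sum_const, nsmul_eq_mul, div_eq_mul_one_div (A : ℝ)]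
    gcongr
    calc _ ≤ (Finset.range A).card := by
            apply Finset.card_le_card
            intro j; simp
      _ = A := by simp
  have hs : Summable fun j : ℕ => (negCount (w j) : ℝ) := by
    apply summable_of_ne_finset_zero (s := Finset.range A)
    intro j hj
    rw [negCount_zero (hpos j (by simpa using hj))]; simp
  have g2 : ∑ j ∈ Finset.range s, (negCount (w j) : ℝ) ≤ ∑' j : ℕ, (negCount (w j) : ℝ) :=
    hs.sum_le_tsum _ (fun _ _ => by positivity)
  have g3 := sum_exp_rpow_le hr (mul_pos ht ha) s
  have g4 : (∑ j ∈ Finset.range s, Real.exp (-(t * a) * ((j : ℝ) + 1) ^ r)) / t ≤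
      r⁻¹ * Real.Gamma (1 / r) * a ^ (-(1 / r)) * (t ^ (-(1 / r)) / t) := by
    rw [Real.mul_rpow ht.le ha.le] at g3
    calc _ ≤ (r⁻¹ * Real.Gamma (1 / r) * (t ^ (-(1 / r)) * a ^ (-(1 / r)))) / t := by gcongr
      _ = _ := by ring
  linarith

lemma natDigit_eq_zero {b k i : ℕ} (h : k < b ^ i) : natDigit b k i = 0 := by
  unfold natDigit; rw [Nat.div_eq_of_lt h]; simp

lemma natDigit_zero_left (b i : ℕ) : natDigit b 0 i = 0 := by simp [natDigit]

lemma sum_digit_range {M : Type*} [AddCommMonoid M] {b k : ℕ} (hb : 2 ≤ b) (F : ℕ → M)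
    (hF : ∀ i, natDigit b k i = 0 → F i = 0) {n : ℕ} (hn : k < b ^ n) :
    ∑ i ∈ Finset.range k, F i = ∑ i ∈ Finset.range n, F i := by
  have h1 : ∀ i, k ≤ i → F i = 0 := fun i hi => hF i (natDigit_eq_zero
    (lt_of_le_of_lt hi (Nat.lt_pow_self (by omega))))
  have h2 : ∀ i, n ≤ i → F i = 0 := fun i hi => hF i (natDigit_eq_zero
    (lt_of_lt_of_le hn (Nat.pow_le_pow_right (by omega) hi)))
  rcases le_total k n with h | h
  · refine Finset.sum_subset (by simpa using h) fun i _ hi => h1 i (by simpa using hi)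
  · refine (Finset.sum_subset (by simpa using h) fun i _ hi => h2 i (by simpa using hi)).symm

lemma sum_digits_prod {R : Type*} [CommSemiring R] (b n : ℕ) (g : Fin n → ℕ → R) :
    ∑ k ∈ Finset.range (b ^ n), ∏ i : Fin n, g i (natDigit b k i) =
      ∏ i : Fin n, ∑ c ∈ Finset.range b, g i c := by
  rw [← Fin.sum_univ_eq_sum_range (fun k => ∏ i : Fin n, g i (natDigit b k i))]
  simp_rw [← Fin.sum_univ_eq_sum_range]
  rw [Fintype.prod_sum, ← (finFunctionFinEquiv (m := b) (n := n)).symm.sum_comp]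
  refine Finset.sum_congr rfl fun k _ => Finset.prod_congr rfl fun i _ => ?_
  rw [finFunctionFinEquiv_symm_apply_val]; rfl

lemma sum_mdick_1d {b : ℕ} (hb : 2 ≤ b) (t α : ℝ) (n : ℕ) :
    ∑ k ∈ Finset.range (b ^ n), Real.exp (-t * mdickWt b α k) ≤
      Real.exp (((b : ℝ) - 1) * ∑ i ∈ Finset.range n, Real.exp (-t * max ((i : ℝ) + 1 + α) 1)) := by
  have h1 : ∀ k ∈ Finset.range (b ^ n), Real.exp (-t * mdickWt b α k) =
      ∏ i : Fin n, (fun (i : Fin n) (c : ℕ) => if c ≠ 0 then Real.exp (-t * max ((i : ℝ) + 1 + α) 1) else 1)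
        i (natDigit b k i) := by
    intro k hk
    unfold mdickWt
    rw [sum_digit_range hb _ (by intro i hi; simp [hi]) (Finset.mem_range.1 hk), Finset.mul_sum,
      Real.exp_sum, ← Fin.prod_univ_eq_prod_range (fun i => Real.exp (-t * if natDigit b k i ≠ 0 then max ((i : ℝ) + 1 + α) 1 else 0))]
    refine Finset.prod_congr rfl fun i _ => ?_
    dsimp only
    split_ifs <;> simp
  rw [Finset.sum_congr rfl h1, sum_digits_prod b n (fun (i : Fin n) (c : ℕ) => if c ≠ 0 then Real.exp (-t * max ((i : ℝ) + 1 + α) 1) else 1), Finset.mul_sum, Real.exp_sum,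
    ← Fin.prod_univ_eq_prod_range (fun i => Real.exp (((b : ℝ) - 1) * Real.exp (-t * max ((i : ℝ) + 1 + α) 1)))]
  refine Finset.prod_le_prod (fun i _ => Finset.sum_nonneg fun c _ => by split_ifs <;> positivity) fun i _ => ?_
  obtain ⟨m, rfl⟩ : ∃ m, b = m + 1 := ⟨b - 1, by omega⟩
  rw [Finset.sum_range_succ']
  simp only [ne_eq, Nat.succ_ne_zero, not_false_eq_true, if_true, not_true_eq_false, if_false,
    Finset.sum_const, Finset.card_range, nsmul_eq_mul]
  push_cast
  rw [add_sub_cancel_right]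
  exact Real.add_one_le_exp _

lemma sum_mdick {b : ℕ} (hb : 2 ≤ b) {w : ℕ → ℝ} {a r t : ℝ} (ha : 0 < a) (hr : 0 < r) {A : ℕ}
    (hgrow : ∀ j : ℕ, A ≤ j → a * ((j : ℝ) + 1) ^ r ≤ w j) (ht : 0 < t) (s : ℕ)
    (F : Finset (Fin s → ℕ)) :
    ∑ k ∈ F, Real.exp (-t * mdickWtV b (fun j : Fin s => w j) k) ≤
      Real.exp (((b : ℝ) - 1) * ((A : ℝ) / t + (∑' j : ℕ, (negCount (w j) : ℝ)) +
       r⁻¹ * Real.Gamma (1 / r) * a ^ (-(1 / r)) * (t ^ (-(1 / r)) / t))) := by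
  have hb1 : (0:ℝ) ≤ (b : ℝ) - 1 := by
    have : (2:ℝ) ≤ b := by exact_mod_cast hb
    linarith
  obtain ⟨n, hn⟩ : ∃ n : ℕ, F ⊆ Fintype.piFinset fun _ : Fin s => Finset.range (b ^ n) := by
    refine ⟨F.sup fun k => Finset.univ.sup k, fun k hk => ?_⟩
    rw [Fintype.mem_piFinset]
    intro j
    rw [Finset.mem_range]
    refine lt_of_le_of_lt ?_ (Nat.lt_pow_self (by omega))
    exact (Finset.le_sup (f := k) (Finset.mem_univ j)).trans
      (Finset.le_sup (f := fun k : Fin s → ℕ => Finset.univ.sup k) hk)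
  refine (Finset.sum_le_sum_of_subset_of_nonneg hn fun _ _ _ => (Real.exp_pos _).le).trans ?_
  have h1 : ∀ k : Fin s → ℕ, Real.exp (-t * mdickWtV b (fun j : Fin s => w j) k) =
      ∏ j : Fin s, (fun (j : Fin s) (c : ℕ) => Real.exp (-t * mdickWt b (w j) c)) j (k j) := by
    intro k
    unfold mdickWtV
    rw [Finset.mul_sum, Real.exp_sum]
  simp_rw [h1]
  rw [← Finset.prod_univ_sum (fun _ : Fin s => Finset.range (b ^ n)) (fun (j : Fin s) (c : ℕ) => Real.exp (-t * mdickWt b (w j) c))]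
  refine (Finset.prod_le_prod (fun (j : Fin s) _ => Finset.sum_nonneg fun c _ => (Real.exp_pos _).le)
    fun (j : Fin s) _ => sum_mdick_1d hb t (w j) n).trans ?_
  rw [← Real.exp_sum, ← Finset.mul_sum]
  exact Real.exp_le_exp.2 (mul_le_mul_of_nonneg_left (sum_all ha hr hgrow ht s n) hb1)

lemma digit_expansion {b : ℕ} (hb : 2 ≤ b) (n : ℕ) : ∀ v : ℕ → ℕ, (∀ i, v i < b) →
    0 ≤ ∑ i ∈ Finset.range n, (v i : ℝ) / (b : ℝ) ^ (i + 1) ∧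
    ∑ i ∈ Finset.range n, (v i : ℝ) / (b : ℝ) ^ (i + 1) < 1 ∧
    ∀ i, realDigit b (∑ i ∈ Finset.range n, (v i : ℝ) / (b : ℝ) ^ (i + 1)) i =
      if i < n then v i else 0 := by
  have hb0 : (0:ℝ) < b := by positivity
  induction n with
  | zero => intro v _; simp [realDigit]
  | succ n ih =>
    intro v hv
    obtain ⟨h1, h2, h3⟩ := ih (fun i => v (i + 1)) (fun i => hv _)
    set S := ∑ i ∈ Finset.range n, (v (i + 1) : ℝ) / (b : ℝ) ^ (i + 1) with hS
    have hrec : ∑ i ∈ Finset.range (n + 1), (v i : ℝ) / (b : ℝ) ^ (i + 1) = (v 0 + S) / b := by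
      rw [Finset.sum_range_succ', hS, add_div, Finset.sum_div, add_comm]
      congr 1
      · simp
      · refine Finset.sum_congr rfl fun i _ => ?_
        rw [pow_succ _ (i + 1)]
        field_simp
    have hv0 : (v 0 : ℝ) + 1 ≤ b := by exact_mod_cast hv 0
    rw [hrec]
    refine ⟨by positivity, ?_, ?_⟩
    · rw [div_lt_one hb0]; linarith
    · intro i
      rcases i with _ | i
      · unfold realDigit
        have : (↑(v 0) + S) / (b : ℝ) * (b : ℝ) ^ (0 + 1) = ((v 0 : ℤ) : ℝ) + S := by
          field_simp; simp [mul_comm]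
        rw [this, Int.floor_intCast_add, Int.floor_eq_zero_iff.2 ⟨h1, h2⟩]
        simp only [add_zero, Nat.zero_lt_succ, if_true]
        rw [Int.emod_eq_of_lt (by positivity) (by exact_mod_cast hv 0)]
        simp
      · have h4 := h3 i
        simp only [Nat.add_lt_add_iff_right] 
        rw [← h4]
        unfold realDigit
        have : (↑(v 0) + S) / (b : ℝ) * (b : ℝ) ^ (i + 1 + 1) =
            (((v 0 : ℤ) * (b : ℤ) ^ i * (b : ℤ) : ℤ) : ℝ) + S * (b : ℝ) ^ (i + 1) := by
          push_cast; field_simp; ring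
        rw [this, Int.floor_intCast_add, Int.mul_add_emod_self_right]

lemma netPoint_props {b : ℕ} (hb : 2 ≤ b) {s l d : ℕ}
    (G : Fin s → Matrix (Fin l) (Fin d) (ZMod b)) (m : ℕ) (j : Fin s) :
    netPoint b G m j ∈ Set.Ico (0:ℝ) 1 ∧
    ∀ i, realDigit b (netPoint b G m j) i =
      if h : i < l then ((G j).mulVec (trunc b d m) ⟨i, h⟩).val else 0 := by
  have : NeZero b := ⟨by omega⟩
  set v : ℕ → ℕ := fun i => if h : i < l then ((G j).mulVec (trunc b d m) ⟨i, h⟩).val else 0 with hv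
  have hvb : ∀ i, v i < b := by
    intro i
    simp only [hv]
    split_ifs
    · exact ZMod.val_lt _
    · omega
  have e : netPoint b G m j = ∑ i ∈ Finset.range l, (v i : ℝ) / (b : ℝ) ^ (i + 1) := by
    unfold netPoint
    rw [← Fin.sum_univ_eq_sum_range (fun i => (v i : ℝ) / (b : ℝ) ^ (i + 1))]
    refine Finset.sum_congr rfl fun i _ => ?_
    simp [hv]
  obtain ⟨h1, h2, h3⟩ := digit_expansion hb l v hvb
  rw [e]
  refine ⟨⟨h1, h2⟩, fun i => ?_⟩
  rw [h3 i]
  simp only [hv]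
  split_ifs <;> rfl

lemma wal1_net {b : ℕ} [NeZero b] (hb : 2 ≤ b) {s l d : ℕ}
    (G : Fin s → Matrix (Fin l) (Fin d) (ZMod b)) (m : ℕ) (j : Fin s) (k : ℕ) :
    wal1 b k (netPoint b G m j) =
      ZMod.stdAddChar (trunc b l k ⬝ᵥ (G j).mulVec (trunc b d m)) := by
  have h1 : wal1 b k (netPoint b G m j) = ZMod.stdAddChar (((∑ i ∈ Finset.range k,
      natDigit b k i * realDigit b (netPoint b G m j) i : ℕ) : ℤ) : ZMod b) := by
    rw [ZMod.stdAddChar_coe]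
    unfold wal1
    congr 1
    push_cast
    ring
  rw [h1]
  congr 1
  push_cast
  rw [sum_digit_range (b := b) (k := k) hb _ (by intro i hi; simp [hi]) (n := l + k)
    (lt_of_lt_of_le (Nat.lt_pow_self (by omega)) (Nat.pow_le_pow_right (by omega) (Nat.le_add_left k l)))]
  rw [← Finset.sum_subset (s₁ := Finset.range l) (by simp)]
  · rw [← Fin.sum_univ_eq_sum_range (fun i => (natDigit b k i : ZMod b) * (realDigit b (netPoint b G m j) i : ZMod b))]
    refine Finset.sum_congr rfl fun i _ => ?_
    rw [(netPoint_props hb G m j).2 i]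
    simp [trunc]
  · intro i _ hi
    rw [(netPoint_props hb G m j).2 i]
    rw [dif_neg (by simpa using hi)]; simp

lemma addChar_sum {ι R : Type*} [AddCommMonoid R] (ψ : AddChar R ℂ) (s : Finset ι) (f : ι → R) :
    ψ (∑ i ∈ s, f i) = ∏ i ∈ s, ψ (f i) := by
  classical
  induction s using Finset.induction_on with
  | empty => simp
  | insert x s hx ih => rw [Finset.sum_insert hx, Finset.prod_insert hx, AddChar.map_add_eq_mul, ih]

lemma wal_net {b : ℕ} [NeZero b] (hb : 2 ≤ b) {s l d : ℕ}
    (G : Fin s → Matrix (Fin l) (Fin d) (ZMod b)) (m : ℕ) (k : Fin s → ℕ) :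
    wal b k (netPoint b G m) =
      ZMod.stdAddChar ((∑ j, (G j)ᵀ.mulVec (trunc b l (k j))) ⬝ᵥ (trunc b d m)) := by
  unfold wal
  simp_rw [wal1_net hb]
  rw [← addChar_sum, sum_dotProduct]
  congr 1
  refine Finset.sum_congr rfl fun j _ => ?_
  rw [Matrix.dotProduct_mulVec, Matrix.mulVec_transpose]

lemma sum_range_zmod {b : ℕ} [NeZero b] (F : ZMod b → ℂ) :
    ∑ e ∈ Finset.range b, F (e : ZMod b) = ∑ x, F x := by
  refine Finset.sum_bij' (fun e _ => (e : ZMod b)) (fun x _ => x.val) ?_ ?_ ?_ ?_ ?_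
  · simp
  · intro x _; simpa using ZMod.val_lt x
  · intro e he; exact ZMod.val_cast_of_lt (by simpa using he)
  · intro x _; simp
  · simp

lemma sum_wal_net {b : ℕ} (hb : 2 ≤ b) {s l d : ℕ}
    (G : Fin s → Matrix (Fin l) (Fin d) (ZMod b)) (k : Fin s → ℕ) (hk : k ∉ dualNet b G) :
    ∑ m ∈ Finset.range (b ^ d), wal b k (netPoint b G m) = 0 := by
  have : NeZero b := ⟨by omega⟩
  simp_rw [wal_net hb]
  set c := ∑ j, (G j)ᵀ.mulVec (trunc b l (k j)) with hc
  have hc0 : c ≠ 0 := hk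
  obtain ⟨i, hi⟩ := Function.ne_iff.1 hc0
  have h1 : ∀ m, (ZMod.stdAddChar (c ⬝ᵥ trunc b d m) : ℂ) =
      ∏ i : Fin d, ZMod.stdAddChar (((natDigit b m i : ℕ) : ZMod b) * c i) := by
    intro m
    rw [dotProduct, addChar_sum]
    refine Finset.prod_congr rfl fun i _ => ?_
    rw [mul_comm]; rfl
  simp_rw [h1]
  rw [sum_digits_prod b d (fun (i : Fin d) (e : ℕ) => (ZMod.stdAddChar ((e : ZMod b) * c i) : ℂ))]
  refine Finset.prod_eq_zero (Finset.mem_univ i) ?_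
  rw [sum_range_zmod (fun x => ZMod.stdAddChar (x * c i)),
    AddChar.sum_mulShift _ (ZMod.isPrimitive_stdAddChar b), if_neg (by simpa using hi)]
  simp

lemma norm_wal {b s : ℕ} (k : Fin s → ℕ) (x : Fin s → ℝ) : ‖wal b k x‖ = 1 := by
  unfold wal
  rw [norm_prod]
  refine Finset.prod_eq_one fun j _ => ?_
  unfold wal1
  have : (2 * Real.pi * Complex.I / (b : ℂ) * ((∑ i ∈ Finset.range (k j), natDigit b (k j) i * realDigit b (x j) i : ℕ) : ℂ)) =
    ((2 * Real.pi / (b : ℝ) * ((∑ i ∈ Finset.range (k j), natDigit b (k j) i * realDigit b (x j) i : ℕ) : ℝ) : ℝ) : ℂ) * Complex.I := by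
    push_cast; ring
  rw [this, Complex.norm_exp_ofReal_mul_I]

lemma wal_zero {b s : ℕ} (x : Fin s → ℝ) : wal b (0 : Fin s → ℕ) x = 1 := by
  simp [wal, wal1]

lemma coeff_zero {b s : ℕ} (f : (Fin s → ℝ) → ℝ) : walshCoeff b f 0 = (intBox s f : ℂ) := by
  unfold walshCoeff intBox
  simp_rw [wal_zero]
  simp only [map_one, mul_one]
  exact integral_ofReal

lemma error_bound {b : ℕ} (hb : 2 ≤ b) {s l d : ℕ} (α : Fin s → ℝ)
    (G : Fin s → Matrix (Fin l) (Fin d) (ZMod b)) (f : (Fin s → ℝ) → ℝ)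
    (hf : MemW' b α f) (hn : normW' b α f ≤ 1) {t M E : ℝ} (ht : 0 < t)
    (htb : 2 * t = Real.log b)
    (hE : ∀ F : Finset (Fin s → ℕ), ∑ k ∈ F, Real.exp (-t * mdickWtV b α k) ≤ E)
    (hG : ∀ k : Fin s → ℕ, k ≠ 0 → mdickWtV b α k ≤ M → k ∉ dualNet b G) :
    |intBox s f - qmcNet b G f| ≤ E * Real.exp (-(t * M)) := by
  have hb0 : (0:ℝ) < b := by positivity
  have hcoef : ∀ k, ‖walshCoeff b f k‖ ≤ Real.exp (-(2 * t) * mdickWtV b α k) := by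
    intro k
    have h1 : ‖walshCoeff b f k‖ * (b : ℝ) ^ mdickWtV b α k ≤ 1 := (le_ciSup hf.2 k).trans hn
    rw [Real.rpow_def_of_pos hb0, ← htb] at h1
    rw [neg_mul, Real.exp_neg, ← one_div]
    rwa [le_div_iff₀ (Real.exp_pos _)]
  have hsum := summable_of_sum_le (f := fun k : Fin s → ℕ => Real.exp (-t * mdickWtV b α k))
    (fun _ => (Real.exp_pos _).le) hE
  have htsum : ∑' k : Fin s → ℕ, Real.exp (-t * mdickWtV b α k) ≤ E := hsum.tsum_le_of_sum_le hE
  have hcube : ∀ m, netPoint b G m ∈ unitCube s := fun m j _ => (netPoint_props hb G m j).1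
  have hQ : HasSum (fun k : Fin s → ℕ => ((b : ℂ) ^ d)⁻¹ * ∑ m ∈ Finset.range (b ^ d),
      walshCoeff b f k * wal b k (netPoint b G m)) ((qmcNet b G f : ℝ) : ℂ) := by
    have := (hasSum_sum (s := Finset.range (b ^ d)) fun m _ => hf.1 _ (hcube m)).mul_left ((b : ℂ) ^ d)⁻¹
    have e : ((qmcNet b G f : ℝ) : ℂ) = ((b : ℂ) ^ d)⁻¹ * ∑ m ∈ Finset.range (b ^ d), ((f (netPoint b G m) : ℝ) : ℂ) := by
      unfold qmcNet
      push_cast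
      rfl
    rw [e]
    exact this
  have hI : HasSum (fun k : Fin s → ℕ => if k = 0 then walshCoeff b f 0 else 0) ((intBox s f : ℝ) : ℂ) := by
    rw [← coeff_zero (b := b)]
    exact hasSum_ite_eq 0 _
  have hD := hI.sub hQ
  have hbd : ∀ k : Fin s → ℕ, ‖(if k = 0 then walshCoeff b f 0 else 0) - ((b : ℂ) ^ d)⁻¹ * ∑ m ∈ Finset.range (b ^ d),
      walshCoeff b f k * wal b k (netPoint b G m)‖ ≤ Real.exp (-t * mdickWtV b α k) * Real.exp (-(t * M)) := by
    intro k
    have hbd0 : (b : ℂ) ^ d ≠ 0 := pow_ne_zero _ (by exact_mod_cast hb0.ne')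
    by_cases hk : k = 0
    · subst hk
      simp only [if_true, wal_zero, mul_one, Finset.sum_const, Finset.card_range, nsmul_eq_mul]
      push_cast
      rw [inv_mul_cancel_left₀ hbd0, sub_self, norm_zero]
      positivity
    · rw [if_neg hk, zero_sub, norm_neg, ← Finset.mul_sum]
      by_cases hd : k ∈ dualNet b G
      · have hM : M < mdickWtV b α k := by
          by_contra h
          exact hG k hk (not_lt.1 h) hd
        have hs1 : ‖∑ m ∈ Finset.range (b ^ d), wal b k (netPoint b G m)‖ ≤ (b : ℝ) ^ d := by
          refine (norm_sum_le _ _).trans ?_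
          simp [norm_wal]
        rw [norm_mul, norm_mul, norm_inv, norm_pow, Complex.norm_natCast, ← Real.exp_add]
        calc ((b : ℝ) ^ d)⁻¹ * (‖walshCoeff b f k‖ * ‖∑ m ∈ Finset.range (b ^ d), wal b k (netPoint b G m)‖)
            ≤ ((b : ℝ) ^ d)⁻¹ * (Real.exp (-(2 * t) * mdickWtV b α k) * (b : ℝ) ^ d) := by
              gcongr; exact hcoef k
          _ = Real.exp (-(2 * t) * mdickWtV b α k) := by field_simp
          _ ≤ _ := by
              apply Real.exp_le_exp.2
              nlinarith
      · rw [sum_wal_net hb G k hd]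
        simp only [mul_zero, norm_zero]
        positivity
  have hfin := tsum_of_norm_bounded (hsum.hasSum.mul_right (Real.exp (-(t * M)))) hbd
  rw [hD.tsum_eq, ← Complex.ofReal_sub, Complex.norm_real, Real.norm_eq_abs] at hfin
  exact hfin.trans (by gcongr)

lemma exists_digit {b k : ℕ} (hb : 2 ≤ b) (hk : k ≠ 0) : ∃ i < k, natDigit b k i ≠ 0 := by
  refine ⟨Nat.log b k, Nat.log_lt_self b hk, ?_⟩
  unfold natDigit
  have h1 : 0 < k / b ^ Nat.log b k := Nat.div_pos (Nat.pow_log_le_self b hk) (by positivity)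
  have h2 : k / b ^ Nat.log b k < b := by
    rw [Nat.div_lt_iff_lt_mul (by positivity)]
    have := Nat.lt_pow_succ_log_self (b := b) (by omega) k
    rw [pow_succ] at this
    linarith
  rw [Nat.mod_eq_of_lt h2]
  omega

lemma mdick_nonneg (b : ℕ) (α : ℝ) (k : ℕ) : 0 ≤ mdickWt b α k := by
  refine Finset.sum_nonneg fun i _ => ?_
  split_ifs
  · exact zero_le_one.trans (le_max_right _ _)
  · exact le_rfl

lemma one_le_mdick {b s : ℕ} (hb : 2 ≤ b) (α : Fin s → ℝ) {k : Fin s → ℕ} (hk : k ≠ 0) :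
    1 ≤ mdickWtV b α k := by
  obtain ⟨j, hj⟩ := Function.ne_iff.1 hk
  obtain ⟨i, hi, hd⟩ := exists_digit hb (k := k j) (by simpa using hj)
  have h1 : mdickWt b (α j) (k j) ≤ mdickWtV b α k :=
    Finset.single_le_sum (f := fun j => mdickWt b (α j) (k j)) (fun j _ => mdick_nonneg b _ _)
      (Finset.mem_univ j)
  have h2 : (if natDigit b (k j) i ≠ 0 then max ((i : ℝ) + 1 + α j) 1 else 0) ≤ mdickWt b (α j) (k j) :=
    Finset.single_le_sum (f := fun i : ℕ => if natDigit b (k j) i ≠ 0 then max ((i : ℝ) + 1 + α j) 1 else 0)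
      (fun i _ => by
        split_ifs
        · exact zero_le_one.trans (le_max_right _ _)
        · exact le_rfl) (Finset.mem_range.2 hi)
  rw [if_pos hd] at h2
  exact ((le_max_right _ _).trans h2).trans h1

/-- The additive map sending generating matrices to the dual vector of `κ`. -/
def dualMap (b s l d : ℕ) (κ : Fin s → Fin l → ZMod b) :
    (Fin s → Matrix (Fin l) (Fin d) (ZMod b)) →+ (Fin d → ZMod b) where
  toFun G := ∑ j, (G j)ᵀ.mulVec (κ j)
  map_zero' := by simp
  map_add' G H := by
    rw [← Finset.sum_add_distrib]
    refine Finset.sum_congr rfl fun j _ => ?_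
    rw [Pi.add_apply, Matrix.transpose_add, Matrix.add_mulVec]

lemma minFac_le_card {b : ℕ} (hb : 2 ≤ b) {c : ZMod b} (hc : c ≠ 0) :
    b.minFac ≤ Nat.card (AddSubgroup.zmultiples c) := by
  have : NeZero b := ⟨by omega⟩
  apply Nat.minFac_le_of_dvd
  · have : Nat.card (AddSubgroup.zmultiples c) ≠ 1 := by
      rw [Ne, AddSubgroup.card_eq_one, AddSubgroup.zmultiples_eq_bot]
      exact hc
    have : 0 < Nat.card (AddSubgroup.zmultiples c) := Nat.card_pos
    omega
  · have := AddSubgroup.card_addSubgroup_dvd_card (AddSubgroup.zmultiples c)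
    rwa [Nat.card_zmod] at this

lemma ker_card {b s l d : ℕ} (hb : 2 ≤ b) (κ : Fin s → Fin l → ZMod b) {j : Fin s} {i : Fin l}
    (h : κ j i ≠ 0) :
    Nat.card (dualMap b s l d κ).ker * b.minFac ^ d ≤
      Nat.card (Fin s → Matrix (Fin l) (Fin d) (ZMod b)) := by
  have : NeZero b := ⟨by omega⟩
  rw [← AddSubgroup.card_mul_index (dualMap b s l d κ).ker, AddSubgroup.index_ker]
  refine Nat.mul_le_mul_left _ ?_
  calc b.minFac ^ d ≤ Nat.card (AddSubgroup.zmultiples (κ j i)) ^ d :=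
        Nat.pow_le_pow_left (minFac_le_card hb h) d
    _ = Nat.card (Fin d → AddSubgroup.zmultiples (κ j i)) := by simp [Nat.card_fun]
    _ ≤ Nat.card (dualMap b s l d κ).range := by
      refine Nat.card_le_card_of_injective
        (fun u => (⟨fun e => (u e : ZMod b), ?_⟩ : (dualMap b s l d κ).range)) ?_
      · have hu : ∀ e, ∃ n : ℤ, n • κ j i = (u e : ZMod b) := fun e =>
          AddSubgroup.mem_zmultiples_iff.1 (u e).2
        choose n hn using hu
        refine ⟨Pi.single j (Matrix.of fun i' e => if i' = i then (n e : ZMod b) else 0), ?_⟩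
        ext e
        simp only [dualMap, AddMonoidHom.coe_mk, ZeroHom.coe_mk]
        rw [Finset.sum_eq_single j]
        · simp [Matrix.mulVec, dotProduct, ← hn]
        · intro j' _ hj'
          simp [Pi.single_eq_of_ne hj']
        · simp
      · intro u v huv
        ext e
        have := congrFun (congrArg Subtype.val huv) e
        exact this

lemma exists_net {b s l d : ℕ} (hb : 2 ≤ b) (B : Finset (Fin s → ℕ))
    (hB : ∀ k ∈ B, ∃ j : Fin s, ∃ i : Fin l, trunc b l (k j) i ≠ 0)
    (hcard : B.card < b.minFac ^ d) :
    ∃ G : Fin s → Matrix (Fin l) (Fin d) (ZMod b), ∀ k ∈ B, k ∉ dualNet b G := by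
  classical
  have : NeZero b := ⟨by omega⟩
  have : Finite (Fin s → Matrix (Fin l) (Fin d) (ZMod b)) :=
    inferInstanceAs (Finite (Fin s → Fin l → Fin d → ZMod b))
  have := Fintype.ofFinite (Fin s → Matrix (Fin l) (Fin d) (ZMod b))
  by_contra hcon
  push Not at hcon
  set T := Nat.card (Fin s → Matrix (Fin l) (Fin d) (ZMod b)) with hT
  have hTpos : 0 < T := Nat.card_pos
  let K : (Fin s → ℕ) → Finset (Fin s → Matrix (Fin l) (Fin d) (ZMod b)) := fun k =>
    Finset.univ.filter fun G => k ∈ dualNet b G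
  have hK : ∀ k ∈ B, (K k).card * b.minFac ^ d ≤ T := by
    intro k hk
    obtain ⟨j, i, hji⟩ := hB k hk
    have h1 := ker_card (d := d) hb (fun j => trunc b l (k j)) hji
    have h2 : (K k).card = Nat.card (dualMap b s l d (fun j => trunc b l (k j))).ker := by
      rw [← Nat.card_eq_finsetCard]
      exact Nat.card_congr (Equiv.subtypeEquivRight fun G => by
        simp only [K, dualMap, AddMonoidHom.mem_ker, Finset.mem_filter, Finset.mem_univ, true_and]
        exact Iff.rfl)
    rwa [h2]
  have hun : T ≤ ∑ k ∈ B, (K k).card := by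
    rw [hT, Nat.card_eq_fintype_card, ← Finset.card_univ]
    refine le_trans (Finset.card_le_card ?_) Finset.card_biUnion_le
    intro G _
    obtain ⟨k, hk, hkG⟩ := hcon G
    exact Finset.mem_biUnion.2 ⟨k, hk, by simp [K, hkG]⟩
  have h3 : T * b.minFac ^ d ≤ B.card * T := by
    calc T * b.minFac ^ d ≤ (∑ k ∈ B, (K k).card) * b.minFac ^ d := Nat.mul_le_mul_right _ hun
      _ = ∑ k ∈ B, (K k).card * b.minFac ^ d := Finset.sum_mul _ _ _
      _ ≤ ∑ k ∈ B, T := Finset.sum_le_sum hK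
      _ = B.card * T := by simp
  rw [mul_comm] at h3
  have := Nat.le_of_mul_le_mul_right h3 hTpos
  omega

lemma trunc_ne {b l k i : ℕ} (hb : 2 ≤ b) (hi : i < l) (h : natDigit b k i ≠ 0) :
    trunc b l k ⟨i, hi⟩ ≠ 0 := by
  unfold trunc
  rw [Ne, ZMod.natCast_eq_zero_iff]
  intro hd
  have := Nat.le_of_dvd (Nat.pos_of_ne_zero h) hd
  have h2 : natDigit b k i < b := Nat.mod_lt _ (by omega)
  omega

lemma count_bound {b : ℕ} (hb : 2 ≤ b) {w : ℕ → ℝ} {a r : ℝ} (ha : 0 < a) (hr : 0 < r) {A : ℕ}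
    (hgrow : ∀ j : ℕ, A ≤ j → a * ((j : ℝ) + 1) ^ r ≤ w j) {C : ℝ}
    (hC : C = ((b : ℝ) - 1) * ((A : ℝ) + r⁻¹ * Real.Gamma (1 / r) * a ^ (-(1 / r))) +
      ((b : ℝ) - 1) * (∑' j : ℕ, (negCount (w j) : ℝ)) + 1)
    (s : ℕ) {M : ℝ} (hM : 1 ≤ M) (F : Finset (Fin s → ℕ))
    (hF : ∀ k ∈ F, mdickWtV b (fun j : Fin s => w j) k ≤ M) :
    (F.card : ℝ) ≤ Real.exp (C * M ^ ((r + 1) / (2 * r + 1))) := by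
  have hM0 : 0 < M := by linarith
  have hb1 : (0:ℝ) ≤ (b : ℝ) - 1 := by
    have : (2:ℝ) ≤ b := by exact_mod_cast hb
    linarith
  set t : ℝ := M ^ (-(r / (2 * r + 1))) with ht
  have htpos : 0 < t := Real.rpow_pos_of_pos hM0 _
  set P : ℝ := M ^ ((r + 1) / (2 * r + 1)) with hP
  set S : ℝ := ∑' j : ℕ, (negCount (w j) : ℝ) with hS
  have hS0 : 0 ≤ S := tsum_nonneg fun _ => by positivity
  set K : ℝ := r⁻¹ * Real.Gamma (1 / r) * a ^ (-(1 / r)) with hK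
  have h2r : (2 * r + 1) ≠ 0 := by positivity
  have e1 : t * M = P := by
    rw [ht, hP]
    nth_rewrite 2 [← Real.rpow_one M]
    rw [← Real.rpow_add hM0]
    congr 1; field_simp; ring
  have e2 : t ^ (-(1 / r)) / t = P := by
    rw [ht, hP, ← Real.rpow_mul hM0.le, ← Real.rpow_sub hM0]
    congr 1; field_simp; ring
  have e3 : 1 / t ≤ P := by
    rw [ht, hP, one_div, ← Real.rpow_neg hM0.le, neg_neg]
    apply Real.rpow_le_rpow_of_exponent_le hM
    gcongr; linarith
  have e4 : 1 ≤ P := Real.one_le_rpow hM (by positivity)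
  have h1 := sum_mdick hb ha hr hgrow htpos s F
  have h2 : (F.card : ℝ) * Real.exp (-t * M) ≤ ∑ k ∈ F, Real.exp (-t * mdickWtV b (fun j : Fin s => w j) k) := by
    rw [← nsmul_eq_mul]
    apply Finset.card_nsmul_le_sum
    intro k hk
    apply Real.exp_le_exp.2
    have := hF k hk
    nlinarith
  have h3 : (F.card : ℝ) ≤ Real.exp (((b : ℝ) - 1) * ((A : ℝ) / t + S + K * (t ^ (-(1 / r)) / t))) * Real.exp (t * M) := by
    have h4 := mul_le_mul_of_nonneg_right (h2.trans h1) (Real.exp_pos (t * M)).le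
    rwa [mul_assoc, ← Real.exp_add, neg_mul, neg_add_cancel, Real.exp_zero, mul_one] at h4
  refine h3.trans ?_
  rw [← Real.exp_add, e1, e2]
  apply Real.exp_le_exp.2
  have h5 : (A : ℝ) / t + S + K * P ≤ ((A : ℝ) + S + K) * P := by
    have : (A : ℝ) / t ≤ A * P := by
      rw [div_eq_mul_one_div]; gcongr
    nlinarith
  have h6 := mul_le_mul_of_nonneg_left h5 hb1
  rw [hC]
  linarith

/-- under the growth condition `a_j ≥ a·j^r` for `j > A`, there is a constant
`Chat > 0`, independent of `s` and `d`, such that for all `s` and `d ≥ 1` there is a digital net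
with `b^d` points and precision `l ≥ D·d^{(2r+1)/(r+1)} - 1 - a_1` whose worst-case error on
`W'_{s,a}` is at most `Chat·exp(-(D·log b/2)·d^{(2r+1)/(r+1)})` (the weight sequence `w` is
indexed from `0`, i.e. `w (j-1)` is the paper's `a_j`). -/
theorem statement18 (b : ℕ) (hb : 2 ≤ b) (w : ℕ → ℝ) (hw : Monotone w)
    (a r : ℝ) (ha : 0 < a) (hr : 0 < r) (A : ℕ)
    (hgrow : ∀ j : ℕ, A ≤ j → a * ((j : ℝ) + 1) ^ r ≤ w j)
    (C D : ℝ)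
    (hC : C = ((b : ℝ) - 1) * ((A : ℝ) + r⁻¹ * Real.Gamma (1 / r) * a ^ (-(1 / r))) +
      ((b : ℝ) - 1) * (∑' j : ℕ, (negCount (w j) : ℝ)) + 1)
    (hD : D = (Real.log (Nat.minFac b) / C) ^ ((2 * r + 1) / (r + 1))) :
    ∃ Chat : ℝ, 0 < Chat ∧
      ∀ s : ℕ, 0 < s → ∀ d : ℕ, 0 < d →
        ∃ l : ℕ, d ≤ l ∧
          D * (d : ℝ) ^ ((2 * r + 1) / (r + 1)) - 1 - w 0 ≤ (l : ℝ) ∧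
          ∃ G : Fin s → Matrix (Fin l) (Fin d) (ZMod b),
            worstErr s {f | MemW' b (fun j : Fin s => w j) f} (normW' b (fun j : Fin s => w j))
                (qmcNet b G) ≤
              ENNReal.ofReal
                (Chat * Real.exp (-(D * Real.log b / 2) * (d : ℝ) ^ ((2 * r + 1) / (r + 1)))) := by


  have hbR : (2:ℝ) ≤ b := by exact_mod_cast hb
  have hb1 : (0:ℝ) ≤ (b : ℝ) - 1 := by linarith
  have hlogb : 0 < Real.log b := Real.log_pos (by linarith)
  have hρ : 2 ≤ b.minFac := (Nat.minFac_prime (by omega)).two_le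
  have hρR : (2:ℝ) ≤ b.minFac := by exact_mod_cast hρ
  have hlogρ : 0 < Real.log b.minFac := Real.log_pos (by linarith)
  have hC1 : 1 ≤ C := by
    rw [hC]
    have hS0 : 0 ≤ ∑' j : ℕ, (negCount (w j) : ℝ) := tsum_nonneg fun _ => by positivity
    have hG : 0 < Real.Gamma (1 / r) := Real.Gamma_pos_of_pos (by positivity)
    have : 0 ≤ ((b : ℝ) - 1) * ((A : ℝ) + r⁻¹ * Real.Gamma (1 / r) * a ^ (-(1 / r))) := by positivity
    have : 0 ≤ ((b : ℝ) - 1) * (∑' j : ℕ, (negCount (w j) : ℝ)) := by positivity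
    linarith
  have hC0 : 0 < C := by linarith
  set p := (2 * r + 1) / (r + 1) with hp
  set t : ℝ := Real.log b / 2 with ht
  have ht0 : 0 < t := by positivity
  refine ⟨_, Real.exp_pos (((b : ℝ) - 1) * ((A : ℝ) / t + (∑' j : ℕ, (negCount (w j) : ℝ)) +
       r⁻¹ * Real.Gamma (1 / r) * a ^ (-(1 / r)) * (t ^ (-(1 / r)) / t))), ?_⟩
  intro s hs d hd
  have hE := sum_mdick hb ha hr hgrow ht0 s
  set M : ℝ := D * (d : ℝ) ^ p with hM
  set B : Set (Fin s → ℕ) := {k | k ≠ 0 ∧ mdickWtV b (fun j : Fin s => w j) k ≤ M} with hB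
  have hBfin : B.Finite := by
    have hsum := summable_of_sum_le
      (f := fun k : Fin s → ℕ => Real.exp (-t * mdickWtV b (fun j : Fin s => w j) k))
      (fun _ => (Real.exp_pos _).le) hE
    have h1 := hsum.tendsto_cofinite_zero.eventually (gt_mem_nhds (Real.exp_pos (-t * M)))
    rw [Filter.eventually_cofinite] at h1
    refine h1.subset ?_
    intro k hk
    have h2 : mdickWtV b (fun j : Fin s => w j) k ≤ M := hk.2
    change ¬ (_ < _)
    rw [not_lt]
    apply Real.exp_le_exp.2
    nlinarith
  have hmem : ∀ k, k ∈ hBfin.toFinset ↔ (k ≠ 0 ∧ mdickWtV b (fun j : Fin s => w j) k ≤ M) := by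
    intro k
    rw [Set.Finite.mem_toFinset]
    exact Iff.rfl
  have hcard : hBfin.toFinset.card < b.minFac ^ d := by
    rcases lt_or_ge M 1 with hM1 | hM1
    · have : hBfin.toFinset = ∅ := by
        rw [Finset.eq_empty_iff_forall_notMem]
        intro k hk
        obtain ⟨hk0, hkM⟩ := (hmem k).1 hk
        have := one_le_mdick hb (fun j : Fin s => w j) hk0
        linarith
      rw [this, Finset.card_empty]
      positivity
    · have h1 := count_bound hb ha hr hgrow hC s hM1 (insert 0 hBfin.toFinset) (by
        intro k hk
        rcases Finset.mem_insert.1 hk with rfl | hk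
        · have : mdickWtV b (fun j : Fin s => w j) (0 : Fin s → ℕ) = 0 := by
            simp [mdickWtV, mdickWt]
          rw [this]; linarith
        · exact ((hmem k).1 hk).2)
      rw [Finset.card_insert_of_notMem (fun h => ((hmem 0).1 h).1 rfl)] at h1
      have h2 : C * M ^ ((r + 1) / (2 * r + 1)) = d * Real.log b.minFac := by
        have hx : 0 ≤ Real.log b.minFac / C := by positivity
        rw [hM, hD, ← Real.mul_rpow hx (Nat.cast_nonneg d), ← Real.rpow_mul (by positivity)]
        have : p * ((r + 1) / (2 * r + 1)) = 1 := by
          rw [hp]; field_simp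
        rw [this, Real.rpow_one]
        field_simp
      rw [h2, mul_comm, Real.exp_mul, Real.exp_log (by linarith), Real.rpow_natCast] at h1
      have h3 : hBfin.toFinset.card + 1 ≤ b.minFac ^ d := by exact_mod_cast h1
      omega
  obtain ⟨l, hl1, hl2, hl3⟩ : ∃ l : ℕ, d ≤ l ∧ M - 1 - w 0 ≤ (l : ℝ) ∧
      ∀ k ∈ hBfin.toFinset, ∀ j, k j ≤ l := by
    refine ⟨max d (max ⌈M - 1 - w 0⌉₊ (hBfin.toFinset.sup fun k => Finset.univ.sup k)),
      le_max_left _ _, ?_, ?_⟩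
    · refine (Nat.le_ceil _).trans ?_
      exact_mod_cast (le_max_left _ _).trans (le_max_right d _)
    · intro k hk j
      refine le_trans ?_ ((le_max_right _ _).trans (le_max_right d _))
      exact (Finset.le_sup (f := k) (Finset.mem_univ j)).trans
        (Finset.le_sup (f := fun k : Fin s → ℕ => Finset.univ.sup k) hk)
  obtain ⟨G, hG⟩ := exists_net (l := l) (d := d) hb hBfin.toFinset (by
    intro k hk
    obtain ⟨j, hj⟩ := Function.ne_iff.1 ((hmem k).1 hk).1
    obtain ⟨i, hi, hdg⟩ := exists_digit hb (k := k j) (by simpa using hj)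
    exact ⟨j, ⟨i, lt_of_lt_of_le hi (hl3 k hk j)⟩, trunc_ne hb _ hdg⟩) hcard
  refine ⟨l, hl1, hl2, G, ?_⟩
  unfold worstErr
  refine iSup_le fun f => iSup_le fun hf => iSup_le fun hn => ENNReal.ofReal_le_ofReal ?_
  have hfin := error_bound hb (fun j : Fin s => w j) G f hf hn ht0 (by rw [ht]; ring) hE
    (M := M) (fun k hk hkM => hG k ((hmem k).2 ⟨hk, hkM⟩))
  have e : -(D * Real.log b / 2) * (d : ℝ) ^ p = -(t * M) := by
    rw [hM, ht]; ring
  rw [e]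
  exact hfin

end
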